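/- Let Ω = (0,1)×(−1,1). Then A∥ = {u ∈ BV(Ω;ℝ²) : ∇u = R(I + γ e₁⊗e₂) with a constant R ∈ SO(2) and γ ∈ L¹(Ω) with ∂₁γ = 0, and D^s u = (ϱ⊗e₂)|D^s u| for some ϱ ∈ L¹_{|D^s u|}(Ω;ℝ²) with |ϱ| = 1 and ϱ parallel to Re₁ for |D^s u|-a.e. point of Ω}. -/

import Mathlib

open MeasureTheory Set Filter Topology
open scoped ENNReal

noncomputable section

/-- We identify `ℝ²` with maps `Fin 2 → ℝ`; `x 0` is the `x₁` coordinate and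
`x 1` the `x₂` coordinate. -/
abbrev V2 := Fin 2 → ℝ

/-- `2 × 2` real matrices. -/
abbrev Mat2 := Matrix (Fin 2) (Fin 2) ℝ

/-- Proper rotations: `SO(2) = {R : R Rᵀ = 1, det R = 1}`. -/
def SO2 : Set Mat2 := {R | R * R.transpose = 1 ∧ R.det = 1}

def e1 : V2 := ![1, 0]
def e2 : V2 := ![0, 1]

/-- Euclidean norm on `ℝ²`. -/
def vnorm (v : V2) : ℝ := Real.sqrt (v 0 ^ 2 + v 1 ^ 2)

/-- Frobenius norm on `2 × 2` matrices. -/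
def mnorm (M : Mat2) : ℝ := Real.sqrt (∑ i, ∑ j, M i j ^ 2)

/-- Euclidean inner product on `ℝ²`. -/
def dot (v w : V2) : ℝ := ∑ i, v i * w i

/-- Tensor (outer) product `a ⊗ b = a bᵀ` of two vectors. -/
def outer (a b : V2) : Mat2 := Matrix.of fun i j => a i * b j

/-- Identification of `ℝ²` with the Euclidean space `EuclideanSpace ℝ (Fin 2)`. -/
def vToE (v : V2) : EuclideanSpace ℝ (Fin 2) := (EuclideanSpace.equiv (Fin 2) ℝ).symm v

/-- Identification of `2×2` matrices with `EuclideanSpace ℝ (Fin 2 × Fin 2)`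
(so that the induced norm is the Frobenius norm). -/
def mToE (M : Mat2) : EuclideanSpace ℝ (Fin 2 × Fin 2) :=
  (EuclideanSpace.equiv (Fin 2 × Fin 2) ℝ).symm fun p => M p.1 p.2

/-- A vector-valued function of one real variable has bounded variation on `s`
(with respect to the Euclidean norm). -/
def BVv (ψ : ℝ → V2) (s : Set ℝ) : Prop := BoundedVariationOn (fun t => vToE (ψ t)) s

/-- A matrix-valued function of one real variable has bounded variation on `s`
(with respect to the Frobenius norm). -/
def BVm (R : ℝ → Mat2) (s : Set ℝ) : Prop := BoundedVariationOn (fun t => mToE (R t)) s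

/-- Componentwise (a.e. pointwise) derivative of a vector-valued function of one variable.
For a one-dimensional `BV` function, the classical derivative exists a.e. and coincides with
the density of the absolutely continuous part of its distributional derivative
(the approximate derivative). -/
def vecDeriv (ψ : ℝ → V2) (t : ℝ) : V2 := fun i => deriv (fun s => ψ s i) t

/-- Componentwise derivative of a matrix-valued function of one variable. -/
def mDeriv (R : ℝ → Mat2) (t : ℝ) : Mat2 := Matrix.of fun i j => deriv (fun s => R s i j) t

/-- The rigid layers `ε Y_rig = {x : Int.fract (x₂/ε) ∈ [λ, 1)}` (1-periodic extension of
`[0,1) × [λ,1)`, scaled by `ε`). -/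
def rigid2 (lam ε : ℝ) : Set V2 := {x | lam ≤ Int.fract (x 1 / ε)}

/-- The one-dimensional rigid layers `ε I_rig`, where `I_rig` is the 1-periodic extension
of `[λ, 1)`. -/
def rigid1 (lam ε : ℝ) : Set ℝ := {t | lam ≤ Int.fract (t / ε)}

/-- `a_Ω = inf_{x ∈ Ω} x₂`. -/
def aOm (Ω : Set V2) : ℝ := sInf ((fun x : V2 => x 1) '' Ω)

/-- `b_Ω = sup_{x ∈ Ω} x₂`. -/
def bOm (Ω : Set V2) : ℝ := sSup ((fun x : V2 => x 1) '' Ω)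

/-- `Ω` is `x₁`-connected: every horizontal slice is a (possibly empty) interval. -/
def X1Connected (Ω : Set V2) : Prop := ∀ t : ℝ, OrdConnected {s : ℝ | ![s, t] ∈ Ω}

/-- A (nonempty) bounded Lipschitz domain: near every boundary point, after a rotation,
`Ω` is the region above the graph of a Lipschitz function. -/
def IsLipschitzDomain (Ω : Set V2) : Prop :=
  IsOpen Ω ∧ Ω.Nonempty ∧ Bornology.IsBounded Ω ∧
    ∀ x ∈ frontier Ω, ∃ Q ∈ SO2, ∃ L : NNReal, ∃ f : ℝ → ℝ, ∃ r : ℝ, 0 < r ∧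
      LipschitzWith L f ∧ ∀ y ∈ Metric.ball x r, (y ∈ Ω ↔ f (Q.mulVec y 0) < Q.mulVec y 1)

/-- Partial derivative `∂_j φ` of a scalar test function. -/
def pd (j : Fin 2) (φ : V2 → ℝ) (x : V2) : ℝ := fderiv ℝ φ x (Pi.single j 1)

/-- Componentwise integrability of a matrix-valued map. -/
def IntegrableOnM (g : V2 → Mat2) (Ω : Set V2) : Prop :=
  ∀ i j, IntegrableOn (fun x => g x i j) Ω volume

/-- `u ∈ W^{1,1}(Ω;ℝ²)` with weak gradient `gu`, expressed through integration by parts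
against smooth compactly supported test functions. -/
structure IsSobolev11On (Ω : Set V2) (u : V2 → V2) (gu : V2 → Mat2) : Prop where
  int_u : IntegrableOn u Ω volume
  int_gu : IntegrableOnM gu Ω
  ibp : ∀ φ : V2 → ℝ, ContDiff ℝ (⊤ : ℕ∞) φ → HasCompactSupport φ → tsupport φ ⊆ Ω →
    ∀ i j, ∫ x in Ω, u x i * pd j φ x = - ∫ x in Ω, φ x * gu x i j

/-- `u ∈ BV(Ω;ℝ²)`, with distributional derivative `Du = gu · L² + gs · σ`.
Here `gu` is the approximate differential (density of the absolutely continuous part),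
`σ = |D^s u|` is the total variation measure of the singular part (a finite measure,
concentrated on `Ω` and singular with respect to Lebesgue measure), and `gs` is the
polar density of the singular part, of unit Frobenius norm `σ`-a.e. -/
structure HasBVDerivOn (Ω : Set V2) (u : V2 → V2) (gu : V2 → Mat2)
    (σ : Measure V2) (gs : V2 → Mat2) : Prop where
  int_u : IntegrableOn u Ω volume
  int_gu : IntegrableOnM gu Ω
  fin : σ Set.univ ≠ ⊤
  conc : σ Ωᶜ = 0
  perp : σ ⟂ₘ (volume : Measure V2)
  meas_gs : ∀ i j, AEMeasurable (fun x => gs x i j) σ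
  unit : ∀ᵐ x ∂σ, mnorm (gs x) = 1
  ibp : ∀ φ : V2 → ℝ, ContDiff ℝ (⊤ : ℕ∞) φ → HasCompactSupport φ → tsupport φ ⊆ Ω →
    ∀ i j, ∫ x in Ω, u x i * pd j φ x
        = (- ∫ x in Ω, φ x * gu x i j) - ∫ x, φ x * gs x i j ∂σ

/-- `L¹(Ω;ℝ²)` convergence of a sequence. -/
def L1ConvOn (Ω : Set V2) (un : ℕ → V2 → V2) (u : V2 → V2) : Prop :=
  Tendsto (fun n => ∫ x in Ω, vnorm (un n x - u x)) atTop (𝓝 0)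

/-- Weak* convergence of the measures `gn n · L²∟Ω` to `gu · L²∟Ω + gs · σ`
in `M(Ω; ℝ^{2×2})`, tested against continuous functions compactly supported in `Ω`. -/
def MeasConv (Ω : Set V2) (gn : ℕ → V2 → Mat2) (gu : V2 → Mat2)
    (σ : Measure V2) (gs : V2 → Mat2) : Prop :=
  ∀ φ : V2 → ℝ, Continuous φ → HasCompactSupport φ → tsupport φ ⊆ Ω → ∀ i j,
    Tendsto (fun n => ∫ x in Ω, φ x * gn n x i j) atTop
      (𝓝 ((∫ x in Ω, φ x * gu x i j) + ∫ x, φ x * gs x i j ∂σ))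

/-- Weak* convergence in `BV(Ω;ℝ²)` of a sequence of `W^{1,1}` maps to a `BV` limit:
`L¹` convergence together with weak* convergence of the derivative measures. -/
def WeakStarToBV (Ω : Set V2) (un : ℕ → V2 → V2) (u : V2 → V2) : Prop :=
  ∃ gu σ gs, HasBVDerivOn Ω u gu σ gs ∧ L1ConvOn Ω un u ∧
    ∀ gn : ℕ → V2 → Mat2, (∀ n, IsSobolev11On Ω (un n) (gn n)) → MeasConv Ω gn gu σ gs

/-- `u ∈ A_ε`, witnessed by the data `R ∈ L^∞(Ω;SO(2))` and `γ ∈ L¹(Ω)`: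
`u ∈ W^{1,1}(Ω;ℝ²)` with `∇u = R (I + γ e₁⊗e₂)` a.e. and `γ = 0` a.e. on `εY_rig ∩ Ω`. -/
structure MemAeps (Ω : Set V2) (lam ε : ℝ) (u : V2 → V2)
    (R : V2 → Mat2) (γ : V2 → ℝ) : Prop where
  so2 : ∀ᵐ x ∂(volume.restrict Ω), R x ∈ SO2
  int_γ : IntegrableOn γ Ω volume
  sob : IsSobolev11On Ω u fun x => R x * (1 + γ x • outer e1 e2)
  rig : ∀ᵐ x ∂(volume.restrict (Ω ∩ rigid2 lam ε)), γ x = 0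

/-- The elastoplastic energy `E_ε(u) = ∫_Ω |γ| dx` for `u ∈ A_ε`, `∞` otherwise,
as an `ℝ≥0∞`-valued functional (the decomposition data is essentially unique). -/
def Eeps (Ω : Set V2) (lam ε : ℝ) (u : V2 → V2) : ℝ≥0∞ :=
  sInf {c | ∃ R γ, MemAeps Ω lam ε u R γ ∧ c = ∫⁻ x in Ω, ENNReal.ofReal |γ x|}

/-- `u ∈ A` relative to the vertical interval `(a, b)`:
`u ∈ BV(Ω;ℝ²)` with `u(x) = R(x₂)x + ψ(x₂)` a.e., `R ∈ BV(a,b;SO(2))`,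
`ψ ∈ BV(a,b;ℝ²)` and `det ∇u = 1` a.e. in `Ω`. -/
def memAOn (Ω : Set V2) (a b : ℝ) (u : V2 → V2) : Prop :=
  ∃ gu σ gs, HasBVDerivOn Ω u gu σ gs ∧
    (∃ R : ℝ → Mat2, ∃ ψ : ℝ → V2, (∀ t ∈ Ioo a b, R t ∈ SO2) ∧
      BVm R (Ioo a b) ∧ BVv ψ (Ioo a b) ∧
      ∀ᵐ x ∂(volume.restrict Ω), u x = (R (x 1)).mulVec x + ψ (x 1)) ∧
    ∀ᵐ x ∂(volume.restrict Ω), (gu x).det = 1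

/-- `u ∈ A`. -/
def memA (Ω : Set V2) (u : V2 → V2) : Prop := memAOn Ω (aOm Ω) (bOm Ω) u

/-- `u ∈ A∥` relative to the vertical interval `(a,b)`:
`u(x) = Rx + ϑ(x₂) R e₁ + c` a.e. with a constant rotation `R ∈ SO(2)`,
`ϑ ∈ BV(a,b)` and `c ∈ ℝ²`. -/
def memAparOn (Ω : Set V2) (a b : ℝ) (u : V2 → V2) : Prop :=
  ∃ R ∈ SO2, ∃ ϑ : ℝ → ℝ, ∃ c : V2, BoundedVariationOn ϑ (Ioo a b) ∧
    ∀ᵐ x ∂(volume.restrict Ω), u x = R.mulVec x + ϑ (x 1) • R.mulVec e1 + c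

/-- `u ∈ A∥`. -/
def memApar (Ω : Set V2) (u : V2 → V2) : Prop := memAparOn Ω (aOm Ω) (bOm Ω) u

/-- The limit energy `E(u) = ∫_Ω |ψ'·Re₁| dx + |D^s u|(Ω)` for `u ∈ A`, `∞` otherwise. -/
def Efun (Ω : Set V2) (u : V2 → V2) : ℝ≥0∞ :=
  sInf {c | ∃ gu σ gs, HasBVDerivOn Ω u gu σ gs ∧
    ∃ R : ℝ → Mat2, ∃ ψ : ℝ → V2,
      (∀ t ∈ Ioo (aOm Ω) (bOm Ω), R t ∈ SO2) ∧ BVm R (Ioo (aOm Ω) (bOm Ω)) ∧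
      BVv ψ (Ioo (aOm Ω) (bOm Ω)) ∧
      (∀ᵐ x ∂(volume.restrict Ω), u x = (R (x 1)).mulVec x + ψ (x 1)) ∧
      (∀ᵐ x ∂(volume.restrict Ω), (gu x).det = 1) ∧
      c = (∫⁻ x in Ω, ENNReal.ofReal |dot (vecDeriv ψ (x 1)) ((R (x 1)).mulVec e1)|)
          + σ Set.univ}

/-- The limit energy on `A∥`: `E(u) = ∫_Ω |ϑ'(x₂)| dx + |D^s u|(Ω)` for `u ∈ A∥`,
`∞` otherwise. -/
def EparFun (Ω : Set V2) (u : V2 → V2) : ℝ≥0∞ :=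
  sInf {c | ∃ gu σ gs, HasBVDerivOn Ω u gu σ gs ∧
    ∃ R ∈ SO2, ∃ ϑ : ℝ → ℝ, ∃ c0 : V2, BoundedVariationOn ϑ (Ioo (aOm Ω) (bOm Ω)) ∧
      (∀ᵐ x ∂(volume.restrict Ω), u x = R.mulVec x + ϑ (x 1) • R.mulVec e1 + c0) ∧
      c = (∫⁻ x in Ω, ENNReal.ofReal |deriv ϑ (x 1)|) + σ Set.univ}

/-- The regularized limit energy `E^δ(u) = ∫_Ω |ϑ'| dx + |D^s u|(Ω) + δ|Ω|` on `A∥`,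
`∞` otherwise. -/
def EDelta (Ω : Set V2) (δ : ℝ) (u : V2 → V2) : ℝ≥0∞ :=
  EparFun Ω u + ENNReal.ofReal δ * volume Ω

/-- `‖v‖_{W^{1,p}(Ω;ℝ²)}^p = ∫_Ω |v|^p + ∫_Ω |Dv|^p` for a map `v` with weak Jacobian `G`. -/
def Wp1 (p : ℝ) (Ω : Set V2) (v : V2 → V2) (G : V2 → Mat2) : ℝ≥0∞ :=
  (∫⁻ x in Ω, ENNReal.ofReal (vnorm (v x) ^ p)) + ∫⁻ x in Ω, ENNReal.ofReal (mnorm (G x) ^ p)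

/-- The regularized energy
`E^δ_ε(u) = ∫_Ω |γ| dx + δ ‖∂₁ u‖_{W^{1,p}(Ω;ℝ²)}^p` for `u ∈ A_ε` with
`∂₁u = R e₁ ∈ W^{1,p}(Ω;ℝ²)`, and `∞` otherwise. -/
def EepsDelta (Ω : Set V2) (lam ε δ p : ℝ) (u : V2 → V2) : ℝ≥0∞ :=
  sInf {c | ∃ R γ, MemAeps Ω lam ε u R γ ∧
    ∃ G : V2 → Mat2, IsSobolev11On Ω (fun x => (R x).mulVec e1) G ∧
      c = (∫⁻ x in Ω, ENNReal.ofReal |γ x|) +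
          ENNReal.ofReal δ * Wp1 p Ω (fun x => (R x).mulVec e1) G}

/-- `x` is an approximate jump point of `u`, with one-sided approximate limits `a ≠ b`
relative to a unit normal `ν`. -/
def JumpPt (u : V2 → V2) (x : V2) : Prop :=
  ∃ a b ν : V2, a ≠ b ∧ vnorm ν = 1 ∧
    Tendsto (fun r : ℝ =>
        (∫⁻ z in {z | z ∈ Metric.ball x r ∧ 0 < dot (z - x) ν},
            ENNReal.ofReal (vnorm (u z - a))) / volume (Metric.ball x r))
      (𝓝[>] 0) (𝓝 0) ∧
    Tendsto (fun r : ℝ =>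
        (∫⁻ z in {z | z ∈ Metric.ball x r ∧ dot (z - x) ν < 0},
            ENNReal.ofReal (vnorm (u z - b))) / volume (Metric.ball x r))
      (𝓝[>] 0) (𝓝 0)

/-- The jump set `J_u` of `u` in `Ω`. -/
def jumpSet (Ω : Set V2) (u : V2 → V2) : Set V2 := {x ∈ Ω | JumpPt u x}

/-- `u ∈ SBV_∞(Ω;ℝ²)`: `u ∈ BV` with singular part concentrated on the jump set
(no Cantor part), `∇u ∈ L^∞(Ω;ℝ^{2×2})` and `H¹(J_u) < ∞`. -/
def memSBVinf (Ω : Set V2) (u : V2 → V2) : Prop :=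
  ∃ gu σ gs, HasBVDerivOn Ω u gu σ gs ∧
    σ {x | ¬ JumpPt u x} = 0 ∧
    (∃ M : ℝ, ∀ᵐ x ∂(volume.restrict Ω), mnorm (gu x) ≤ M) ∧
    Measure.hausdorffMeasure (1 : ℝ) (jumpSet Ω u) ≠ ⊤

/-- Piecewise constant functions on `(a,b)` with finitely many jumps
(the class `PC(a,b)`). -/
def PCOn {α : Type*} (a b : ℝ) (f : ℝ → α) : Prop :=
  ∃ S : Finset ℝ, ∀ s₁ ∈ Ioo a b, ∀ s₂ ∈ Ioo a b, s₁ ≤ s₂ →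
    (∀ r ∈ S, r ∉ Icc s₁ s₂) → f s₁ = f s₂

/-- Piecewise Lipschitz functions on `(a,b)` with finitely many jump points:
the class `SBV_∞(a,b;ℝ²)` of one-dimensional special functions of bounded variation
with bounded derivative and finitely many jumps. -/
def PLipOn (a b : ℝ) (f : ℝ → V2) : Prop :=
  ∃ S : Finset ℝ, ∃ L : ℝ, 0 ≤ L ∧ ∀ s₁ ∈ Ioo a b, ∀ s₂ ∈ Ioo a b, s₁ ≤ s₂ →
    (∀ r ∈ S, r ∉ Icc s₁ s₂) → vnorm (f s₂ - f s₁) ≤ L * (s₂ - s₁)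

/-- The rectangle `Ω = (0,1) × (−1,1)`. -/
def Rect : Set V2 := {x | x 0 ∈ Ioo (0:ℝ) 1 ∧ x 1 ∈ Ioo (-1:ℝ) 1}

/-- `f ∈ W^{1,1}(a,b)`: `f` has an integrable weak derivative on `(a,b)`
(absolutely continuous representative). -/
def IsW11On (f : ℝ → ℝ) (a b : ℝ) : Prop :=
  ∃ g : ℝ → ℝ, IntegrableOn g (Ioo a b) volume ∧
    ∀ s ∈ Ioo a b, ∀ t ∈ Ioo a b, f t - f s = ∫ r in s..t, g r

/-! If `u(x) = Rx + ϑ(x₂) Re₁ + c` with `ϑ ∈ BV`, Jordan's decomposition writes `Dϑ` as a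
difference of Stieltjes measures; splitting it by Lebesgue's decomposition and spreading it
uniformly in `x₁` by Fubini gives `Du`, and normalizing the density of the singular part gives
`D^s u = (ϱ⊗e₂)|D^s u|`.

Conversely, `v(x) = u(x) - Rx` satisfies `∂₁v = 0` and `∂₂v = μ Re₁` for a finite signed measure
`μ`. Averaging `μ` in `x₁` against a fixed test function of integral one yields a finite measure on
the line whose distribution function `ϑ` has bounded variation, and `v - ϑ(x₂) Re₁` annihilates
enough products of one-dimensional test functions to be constant almost everywhere. -/

/-- Smooth real functions with compact support in `U`: the test functions of `HasBVDerivOn.ibp`,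
and their one-dimensional counterparts. -/
structure IsTestFunctionOn {E : Type*} [NormedAddCommGroup E] [NormedSpace ℝ E] (U : Set E)
    (φ : E → ℝ) : Prop where
  contDiff : ContDiff ℝ (⊤ : ℕ∞) φ
  hasCompactSupport : HasCompactSupport φ
  tsupport_subset : tsupport φ ⊆ U

namespace IsTestFunctionOn

section NormedSpace

variable {E X : Type*} [NormedAddCommGroup E] [NormedSpace ℝ E] {U : Set E} {φ ψ : E → ℝ}

theorem eq_zero_of_notMem (hφ : IsTestFunctionOn U φ) {x : E} (hx : x ∉ U) : φ x = 0 :=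
  image_eq_zero_of_notMem_tsupport fun h => hx (hφ.tsupport_subset h)

theorem mono {V : Set E} (hφ : IsTestFunctionOn U φ) (hUV : U ⊆ V) : IsTestFunctionOn V φ :=
  ⟨hφ.contDiff, hφ.hasCompactSupport, hφ.tsupport_subset.trans hUV⟩

theorem continuous (hφ : IsTestFunctionOn U φ) : Continuous φ :=
  hφ.contDiff.continuous

theorem differentiable (hφ : IsTestFunctionOn U φ) : Differentiable ℝ φ :=
  hφ.contDiff.differentiable (by simp)

theorem fderiv_apply (hφ : IsTestFunctionOn U φ) (v : E) :
    IsTestFunctionOn U fun x => fderiv ℝ φ x v where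
  contDiff := (hφ.contDiff.fderiv_right (by simp)).clm_apply contDiff_const
  hasCompactSupport := hφ.hasCompactSupport.fderiv_apply ℝ v
  tsupport_subset := (tsupport_fderiv_apply_subset ℝ v).trans hφ.tsupport_subset

theorem sub_const_mul (hφ : IsTestFunctionOn U φ) (hψ : IsTestFunctionOn U ψ) (c : ℝ) :
    IsTestFunctionOn U fun x => φ x - c * ψ x where
  contDiff := hφ.contDiff.sub (contDiff_const.mul hψ.contDiff)
  hasCompactSupport := hφ.hasCompactSupport.sub (hψ.hasCompactSupport.mul_left (f := fun _ => c))
  tsupport_subset := (tsupport_sub φ fun x => c * ψ x).trans <|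
    union_subset hφ.tsupport_subset ((tsupport_mul_subset_right).trans hψ.tsupport_subset)

theorem setIntegral_mul [MeasurableSpace E] {μ : Measure E} (hφ : IsTestFunctionOn U φ)
    (f : E → ℝ) : ∫ x in U, f x * φ x ∂μ = ∫ x, f x * φ x ∂μ :=
  setIntegral_eq_integral_of_forall_compl_eq_zero fun x hx => by
    rw [hφ.eq_zero_of_notMem hx, mul_zero]

theorem setIntegral [MeasurableSpace E] {μ : Measure E} (hφ : IsTestFunctionOn U φ) :
    ∫ x in U, φ x ∂μ = ∫ x, φ x ∂μ :=
  setIntegral_eq_integral_of_forall_compl_eq_zero fun _ => hφ.eq_zero_of_notMem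

theorem integrable_mul_comp [MeasurableSpace E] [OpensMeasurableSpace E] [MeasurableSpace X]
    {μ : Measure X} (hφ : IsTestFunctionOn U φ) {f : X → ℝ} (hf : Integrable f μ) {g : X → E}
    (hg : Measurable g) : Integrable (fun x => f x * φ (g x)) μ :=
  let ⟨_, hC⟩ := hφ.hasCompactSupport.exists_bound_of_continuous hφ.continuous
  hf.mul_bdd (hφ.continuous.measurable.comp hg).aestronglyMeasurable (ae_of_all _ fun x => hC (g x))

variable [MeasurableSpace E] [OpensMeasurableSpace E] {μ : Measure E}

theorem integrable_mul_right (hφ : IsTestFunctionOn U φ) {f : E → ℝ} (hf : Integrable f μ) :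
    Integrable (fun x => f x * φ x) μ :=
  hφ.integrable_mul_comp hf measurable_id

theorem integrable_mul_left (hφ : IsTestFunctionOn U φ) {f : E → ℝ} (hf : Integrable f μ) :
    Integrable (fun x => φ x * f x) μ := by
  simpa only [mul_comm] using hφ.integrable_mul_right hf

theorem integrable [IsFiniteMeasureOnCompacts μ] (hφ : IsTestFunctionOn U φ) : Integrable φ μ :=
  hφ.continuous.integrable_of_hasCompactSupport hφ.hasCompactSupport

end NormedSpace

section Real

variable {I : Set ℝ} {p a : ℝ → ℝ}

protected theorem deriv (hp : IsTestFunctionOn I p) : IsTestFunctionOn I (deriv p) := by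
  simpa only [fderiv_apply_one_eq_deriv] using hp.fderiv_apply 1

theorem integral_deriv_eq_zero (hp : IsTestFunctionOn I p) : ∫ x, deriv p x = 0 :=
  integral_eq_zero_of_hasDerivAt_of_integrable (fun x => (hp.differentiable x).hasDerivAt)
    hp.deriv.integrable hp.integrable

theorem exists_deriv_eq (hI : I.OrdConnected) (hp : IsTestFunctionOn I p) (h0 : ∫ x, p x = 0) :
    ∃ P, IsTestFunctionOn I P ∧ deriv P = p := by
  obtain ⟨c, d, hcd, hsub⟩ : ∃ c d, tsupport p ⊆ Icc c d ∧ Icc c d ⊆ I := by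
    have hK : IsCompact (tsupport p) := hp.hasCompactSupport
    rcases (tsupport p).eq_empty_or_nonempty with h | h
    · exact ⟨1, 0, by simp [h], by simp⟩
    · exact ⟨_, _, hK.isBounded.subset_Icc_sInf_sSup,
        hI.out (hp.tsupport_subset (hK.sInf_mem h)) (hp.tsupport_subset (hK.sSup_mem h))⟩
  have hzero (x) (hx : x ∉ Icc c d) : p x = 0 :=
    image_eq_zero_of_notMem_tsupport fun h => hx (hcd h)
  set P : ℝ → ℝ := fun x => ∫ t in Iic x, p t
  have hder (x) : HasDerivAt P (p x) x := by
    have hP (y) : P y = P 0 + ∫ t in (0 : ℝ)..y, p t := by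
      rw [← intervalIntegral.integral_Iic_sub_Iic hp.integrable.integrableOn
        hp.integrable.integrableOn, add_sub_cancel]
    rw [funext hP]
    exact (hp.continuous.integral_hasStrictDerivAt 0 x).hasDerivAt.const_add _
  have hsupp : tsupport P ⊆ Icc c d := by
    refine closure_minimal (fun x hx => ?_) isClosed_Icc
    by_contra hxcd
    rw [mem_Icc, not_and_or, not_le, not_le] at hxcd
    refine hx ?_
    rcases hxcd with hxc | hdx
    · exact setIntegral_eq_zero_of_forall_eq_zero fun t ht => hzero t fun h =>
        (h.1.trans ht).not_gt hxc
    · rw [← h0]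
      exact setIntegral_eq_integral_of_forall_compl_eq_zero fun t ht => hzero t fun h =>
        ht (h.2.trans hdx.le)
  have hderiv : deriv P = p := funext fun x => (hder x).deriv
  refine ⟨P, ⟨?_, isCompact_Icc.of_isClosed_subset (isClosed_tsupport _) hsupp,
    hsupp.trans hsub⟩, hderiv⟩
  rw [contDiff_infty_iff_deriv, hderiv]
  exact ⟨fun x => (hder x).differentiableAt, hp.contDiff⟩

theorem exists_eq_integral_mul_add_deriv (hI : I.OrdConnected) (hp : IsTestFunctionOn I p)
    (ha : IsTestFunctionOn I a) (ha1 : ∫ x, a x = 1) :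
    ∃ P, IsTestFunctionOn I P ∧ ∀ x, p x = (∫ y, p y) * a x + deriv P x := by
  obtain ⟨P, hP, hP'⟩ := (hp.sub_const_mul ha (∫ y, p y)).exists_deriv_eq hI (by
    rw [integral_sub hp.integrable (ha.integrable.const_mul _), integral_const_mul, ha1]
    ring)
  exact ⟨P, hP, fun x => by rw [hP']; ring⟩

end Real

theorem exists_integral_eq_one {I : Set ℝ} (hI : IsOpen I) (hne : I.Nonempty) :
    ∃ a, IsTestFunctionOn I a ∧ ∫ x, a x = 1 := by
  obtain ⟨x, hx⟩ := hne
  obtain ⟨r, hr, hball⟩ := Metric.isOpen_iff.1 hI x hx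
  let f : ContDiffBump x := ⟨r / 4, r / 2, by positivity, by linarith⟩
  refine ⟨f.normed volume, ⟨f.contDiff_normed, f.hasCompactSupport_normed, ?_⟩, f.integral_normed⟩
  rw [f.tsupport_normed_eq]
  exact (Metric.closedBall_subset_ball (half_lt_self hr)).trans hball

end IsTestFunctionOn

theorem ae_eq_zero_of_forall_integral_mul_eq_zero {E : Type*} [NormedAddCommGroup E]
    [NormedSpace ℝ E] [FiniteDimensional ℝ E] [MeasurableSpace E] [BorelSpace E] {μ : Measure E}
    {U : Set E} (hU : IsOpen U) {f : E → ℝ} (hf : IntegrableOn f U μ)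
    (h : ∀ φ, IsTestFunctionOn U φ → ∫ x in U, f x * φ x ∂μ = 0) :
    ∀ᵐ x ∂μ.restrict U, f x = 0 := by
  rw [ae_restrict_iff' hU.measurableSet]
  refine hU.ae_eq_zero_of_integral_contDiff_smul_eq_zero hf.locallyIntegrableOn
    fun φ hφ hφc hφU => ?_
  have hφ' : IsTestFunctionOn U φ := ⟨hφ, hφc, hφU⟩
  simpa only [smul_eq_mul, mul_comm (φ _), hφ'.setIntegral_mul] using h φ hφ'

/-- On `Ω`, the function `w` has the distributional derivative `h ℒ + k σ` in direction `v`, where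
`ℒ` is the ambient volume. With `v = Pi.single j 1` the last field is one scalar instance of
`HasBVDerivOn.ibp`; with `v = 1` it is the one-dimensional notion. -/
structure HasMeasureDerivOn {E : Type*} [NormedAddCommGroup E] [NormedSpace ℝ E] [MeasureSpace E]
    (Ω : Set E) (v : E) (w h : E → ℝ) (σ : Measure E) (k : E → ℝ) : Prop where
  integrableOn : IntegrableOn w Ω
  integrableOn_density : IntegrableOn h Ω
  integrable_density : Integrable k σ
  integral_mul_fderiv : ∀ φ, IsTestFunctionOn Ω φ →
    ∫ x in Ω, w x * fderiv ℝ φ x v = (-∫ x in Ω, φ x * h x) - ∫ x, φ x * k x ∂σ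

namespace HasMeasureDerivOn

variable {E : Type*} [NormedAddCommGroup E] [NormedSpace ℝ E] [MeasureSpace E]
  {Ω : Set E} {v : E} {w h w₁ w₂ h₁ h₂ k k₁ k₂ : E → ℝ} {σ τ : Measure E}

theorem congr (hw : HasMeasureDerivOn Ω v w₁ h₁ σ k₁) (hww : w₁ =ᵐ[volume.restrict Ω] w₂)
    (hhh : h₁ =ᵐ[volume.restrict Ω] h₂) (hkk : k₁ =ᵐ[σ] k₂) :
    HasMeasureDerivOn Ω v w₂ h₂ σ k₂ where
  integrableOn := hw.integrableOn.congr hww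
  integrableOn_density := hw.integrableOn_density.congr hhh
  integrable_density := hw.integrable_density.congr hkk
  integral_mul_fderiv φ hφ := by
    rw [← integral_congr_ae (hww.mono fun x hx => congrArg (· * fderiv ℝ φ x v) hx),
      ← integral_congr_ae (hhh.mono fun x hx => congrArg (φ x * ·) hx),
      ← integral_congr_ae (hkk.mono fun x hx => congrArg (φ x * ·) hx)]
    exact hw.integral_mul_fderiv φ hφ

theorem const_mul (hw : HasMeasureDerivOn Ω v w h σ k) (c : ℝ) :
    HasMeasureDerivOn Ω v (fun x => c * w x) (fun x => c * h x) σ fun x => c * k x where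
  integrableOn := hw.integrableOn.const_mul c
  integrableOn_density := hw.integrableOn_density.const_mul c
  integrable_density := hw.integrable_density.const_mul c
  integral_mul_fderiv φ hφ := by
    simp only [mul_assoc, mul_left_comm _ c, integral_const_mul, hw.integral_mul_fderiv φ hφ]
    ring

theorem of_contDiff [BorelSpace E] [FiniteDimensional ℝ E] [(volume : Measure E).IsAddHaarMeasure]
    (hΩ : Bornology.IsBounded Ω) (hw : ContDiff ℝ 1 w) (v : E) (σ : Measure E) :
    HasMeasureDerivOn Ω v w (fun x => fderiv ℝ w x v) σ 0 := by
  have hcont : Continuous fun x => fderiv ℝ w x v :=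
    (hw.continuous_fderiv one_ne_zero).clm_apply continuous_const
  have hint {f : E → ℝ} (hf : Continuous f) : IntegrableOn f Ω :=
    (hf.continuousOn.integrableOn_compact hΩ.isCompact_closure).mono_set subset_closure
  refine ⟨hint hw.continuous, hint hcont, integrable_zero _ _ _, fun φ hφ => ?_⟩
  have hmul {f ψ : E → ℝ} (hf : Continuous f) (hψ : IsTestFunctionOn Ω ψ) :
      Integrable fun x => f x * ψ x :=
    (hf.mul hψ.continuous).integrable_of_hasCompactSupport (hψ.hasCompactSupport.mul_left)
  have hibp := integral_mul_fderiv_eq_neg_fderiv_mul_of_integrable (hmul hcont hφ)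
    (hmul hw.continuous (hφ.fderiv_apply v)) (hmul hw.continuous hφ)
    (fun x _ => hw.differentiable one_ne_zero x) fun x _ => hφ.differentiable x
  simp only [Pi.zero_apply, mul_zero, integral_zero, sub_zero]
  simp only [mul_comm (φ _), hφ.setIntegral_mul, (hφ.fderiv_apply v).setIntegral_mul, hibp]

theorem of_absolutelyContinuous [SigmaFinite σ] [SigmaFinite τ]
    (hw : HasMeasureDerivOn Ω v w h σ k) (hστ : σ ≪ τ) :
    HasMeasureDerivOn Ω v w h τ fun x => (σ.rnDeriv τ x).toReal * k x where
  integrableOn := hw.integrableOn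
  integrableOn_density := hw.integrableOn_density
  integrable_density := (integrable_toReal_rnDeriv_mul_iff hστ).2 hw.integrable_density
  integral_mul_fderiv φ hφ := by
    rw [hw.integral_mul_fderiv φ hφ, ← integral_toReal_rnDeriv_mul hστ]
    simp only [mul_left_comm]

variable [OpensMeasurableSpace E]

theorem add (hw₁ : HasMeasureDerivOn Ω v w₁ h₁ σ k₁) (hw₂ : HasMeasureDerivOn Ω v w₂ h₂ σ k₂) :
    HasMeasureDerivOn Ω v (fun x => w₁ x + w₂ x) (fun x => h₁ x + h₂ x) σ
      fun x => k₁ x + k₂ x where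
  integrableOn := hw₁.integrableOn.add hw₂.integrableOn
  integrableOn_density := hw₁.integrableOn_density.add hw₂.integrableOn_density
  integrable_density := hw₁.integrable_density.add hw₂.integrable_density
  integral_mul_fderiv φ hφ := by
    simp only [add_mul, mul_add]
    rw [integral_add ((hφ.fderiv_apply v).integrable_mul_right hw₁.integrableOn)
        ((hφ.fderiv_apply v).integrable_mul_right hw₂.integrableOn),
      integral_add (hφ.integrable_mul_left hw₁.integrableOn_density)
        (hφ.integrable_mul_left hw₂.integrableOn_density),
      integral_add (hφ.integrable_mul_left hw₁.integrable_density)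
        (hφ.integrable_mul_left hw₂.integrable_density),
      hw₁.integral_mul_fderiv φ hφ, hw₂.integral_mul_fderiv φ hφ]
    ring

theorem sub (hw₁ : HasMeasureDerivOn Ω v w₁ h₁ σ k₁) (hw₂ : HasMeasureDerivOn Ω v w₂ h₂ σ k₂) :
    HasMeasureDerivOn Ω v (fun x => w₁ x - w₂ x) (fun x => h₁ x - h₂ x) σ
      fun x => k₁ x - k₂ x := by
  simpa only [neg_one_mul, ← sub_eq_add_neg] using hw₁.add (hw₂.const_mul (-1))

theorem singularPart [SigmaFinite (volume : Measure E)] [SigmaFinite σ]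
    (hw : HasMeasureDerivOn Ω v w h σ k) :
    HasMeasureDerivOn Ω v w (fun x => h x + (σ.rnDeriv volume x).toReal * k x)
      (σ.singularPart volume) k := by
  set ν := volume.withDensity (σ.rnDeriv volume)
  have hk : Integrable k (σ.singularPart volume) ∧ Integrable k ν := by
    have := hw.integrable_density
    rwa [σ.haveLebesgueDecomposition_add volume, integrable_add_measure] at this
  have hkν : Integrable (fun x => (σ.rnDeriv volume x).toReal * k x) :=
    (integrable_withDensity_iff_integrable_smul' (Measure.measurable_rnDeriv _ _)
      (Measure.rnDeriv_lt_top _ _)).1 hk.2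
  refine ⟨hw.integrableOn, hw.integrableOn_density.add hkν.integrableOn, hk.1, fun φ hφ => ?_⟩
  have hsplit : ∫ x, φ x * k x ∂σ = (∫ x, φ x * k x ∂σ.singularPart volume) +
      ∫ x in Ω, φ x * ((σ.rnDeriv volume x).toReal * k x) := by
    conv_lhs => rw [σ.haveLebesgueDecomposition_add volume]
    rw [integral_add_measure (hφ.integrable_mul_left hk.1) (hφ.integrable_mul_left hk.2),
      integral_withDensity_eq_integral_toReal_smul (Measure.measurable_rnDeriv _ _)
        (Measure.rnDeriv_lt_top _ _)]
    simp only [smul_eq_mul, mul_comm (φ _), hφ.setIntegral_mul, ← mul_assoc]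
  simp only [mul_add]
  rw [hw.integral_mul_fderiv φ hφ, hsplit,
    integral_add (hφ.integrable_mul_left hw.integrableOn_density)
      (hφ.integrable_mul_left hkν.integrableOn)]
  ring

end HasMeasureDerivOn

section BoundedVariation

theorem boundedVariationOn_of_edist_le {α E F : Type*} [LinearOrder α] [PseudoEMetricSpace E]
    [PseudoEMetricSpace F] {f : α → E} {g : α → F} {s : Set α} (hg : BoundedVariationOn g s)
    (h : ∀ x ∈ s, ∀ y ∈ s, x ≤ y → edist (f y) (f x) ≤ edist (g y) (g x)) :
    BoundedVariationOn f s := by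
  refine ne_top_of_le_ne_top hg (iSup_le fun p => ?_)
  exact (Finset.sum_le_sum fun i _ => h _ (p.2.2.2 _) _ (p.2.2.2 _) (p.2.2.1 i.le_succ)).trans
    (eVariationOn.sum_le p.2.2.1 p.2.2.2)

theorem boundedVariationOn_add {α E : Type*} [LinearOrder α] [SeminormedAddCommGroup E]
    {f g : α → E} {s : Set α} (hf : BoundedVariationOn f s) (hg : BoundedVariationOn g s) :
    BoundedVariationOn (fun x => f x + g x) s := by
  refine ne_top_of_le_ne_top (ENNReal.add_ne_top.2 ⟨hf, hg⟩) (iSup_le fun p => ?_)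
  calc ∑ i ∈ Finset.range p.1, edist (f (p.2.1 (i + 1)) + g (p.2.1 (i + 1)))
          (f (p.2.1 i) + g (p.2.1 i))
      ≤ ∑ i ∈ Finset.range p.1, (edist (f (p.2.1 (i + 1))) (f (p.2.1 i)) +
          edist (g (p.2.1 (i + 1))) (g (p.2.1 i))) :=
        Finset.sum_le_sum fun _ _ => edist_add_add_le _ _ _ _
    _ ≤ eVariationOn f s + eVariationOn g s := by
        rw [Finset.sum_add_distrib]
        exact add_le_add (eVariationOn.sum_le p.2.2.1 p.2.2.2) (eVariationOn.sum_le p.2.2.1 p.2.2.2)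

variable {α : Type*} [LinearOrder α] {ϑ : α → ℝ} {s : Set α}

theorem exists_monotone_eqOn_sub_of_boundedVariationOn (hϑ : BoundedVariationOn ϑ s) :
    ∃ p q : α → ℝ, Monotone p ∧ Monotone q ∧ EqOn ϑ (p - q) s := by
  rcases s.eq_empty_or_nonempty with rfl | ⟨c, hc⟩
  · exact ⟨0, 0, monotone_const, monotone_const, eqOn_empty _ _⟩
  obtain ⟨p, q, hp, hq, rfl, hpq⟩ :=
    hϑ.locallyBoundedVariationOn.exists_monotoneOn_sub_monotoneOn'
  set V := (eVariationOn (p - q) s).toReal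
  have hsum (x) (hx : x ∈ s) : |(p x - p c) + (q x - q c)| ≤ V := by
    rw [hpq c hc x hx]
    exact variationOnFromTo.abs_le_eVariationOn hϑ
  have hdiff (x) (hx : x ∈ s) : |(p x - q x) - (p c - q c)| ≤ V := hϑ.dist_le hx hc
  obtain ⟨p', hp', hpe⟩ := hp.exists_monotone_extension
    ⟨p c - V, by rintro _ ⟨x, hx, rfl⟩; grind⟩ ⟨p c + V, by rintro _ ⟨x, hx, rfl⟩; grind⟩
  obtain ⟨q', hq', hqe⟩ := hq.exists_monotone_extension
    ⟨q c - V, by rintro _ ⟨x, hx, rfl⟩; grind⟩ ⟨q c + V, by rintro _ ⟨x, hx, rfl⟩; grind⟩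
  exact ⟨p', q', hp', hq', fun x hx => by simp [hpe hx, hqe hx]⟩

end BoundedVariation

theorem integrableOn_Ioo_of_monotone {p : ℝ → ℝ} (hp : Monotone p) (a b : ℝ) :
    IntegrableOn p (Ioo a b) :=
  (hp.locallyIntegrable.integrableOn_isCompact isCompact_Icc).mono_set Ioo_subset_Icc_self

theorem integrableOn_Ioo_of_boundedVariationOn {ϑ : ℝ → ℝ} {a b : ℝ}
    (hϑ : BoundedVariationOn ϑ (Ioo a b)) : IntegrableOn ϑ (Ioo a b) := by
  obtain ⟨p, q, hp, hq, heq⟩ := exists_monotone_eqOn_sub_of_boundedVariationOn hϑ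
  exact ((integrableOn_Ioo_of_monotone hp a b).sub (integrableOn_Ioo_of_monotone hq a b)).congr_fun
    heq.symm measurableSet_Ioo

section Cumulative

variable {X : Type*} [MeasurableSpace X] {g k : X → ℝ} {μ : Measure X}

/-- The distribution function of the push-forward under `g` of the signed measure `k μ`. -/
def cumulative (g k : X → ℝ) (μ : Measure X) (t : ℝ) : ℝ := ∫ x in {x | g x ≤ t}, k x ∂μ

theorem integral_cumulative_mul_deriv [SFinite μ] (hk : Integrable k μ) (hg : Measurable g)
    {b : ℝ → ℝ} (hb : ContDiff ℝ 1 b) (hbc : HasCompactSupport b) :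
    ∫ t, cumulative g k μ t * deriv b t = -∫ x, k x * b (g x) ∂μ := by
  set F : ℝ × X → ℝ := indicator {z | g z.2 ≤ z.1} fun z => deriv b z.1 * k z.2
  have hF : Integrable F (volume.prod μ) := by
    have hb' : Integrable (deriv b) :=
      (hb.continuous_deriv le_rfl).integrable_of_hasCompactSupport hbc.deriv
    exact (hb'.mul_prod hk).indicator
      (measurableSet_le (hg.comp measurable_snd) measurable_fst)
  calc ∫ t, cumulative g k μ t * deriv b t
      = ∫ t, ∫ x, F (t, x) ∂μ := by
        congr with t
        rw [mul_comm, cumulative, ← integral_const_mul,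
          ← integral_indicator (measurableSet_le hg measurable_const)]
        rfl
    _ = ∫ x, (∫ t, F (t, x)) ∂μ := integral_integral_swap (f := fun t x => F (t, x)) hF
    _ = ∫ x, -(k x * b (g x)) ∂μ := by
        congr with x
        have hFx : (fun t => F (t, x)) = indicator (Ici (g x)) fun t => deriv b t * k x := rfl
        rw [hFx, integral_indicator measurableSet_Ici, integral_mul_const,
          integral_Ici_eq_integral_Ioi, hbc.integral_Ioi_deriv_eq hb]
        ring
    _ = -∫ x, k x * b (g x) ∂μ := integral_neg _

theorem boundedVariationOn_cumulative (hk : Integrable k μ) (hg : Measurable g) (s : Set ℝ) :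
    BoundedVariationOn (cumulative g k μ) s := by
  have hmono : Monotone (cumulative g (fun x => |k x|) μ) := fun x y hxy =>
    setIntegral_mono_set hk.abs.integrableOn (ae_of_all _ fun _ => abs_nonneg _)
      (ae_of_all _ fun z (hz : g z ≤ x) => hz.trans hxy)
  have hbdd (x) (_ : x ∈ s) : |cumulative g (fun x => |k x|) μ x| ≤ ∫ x, |k x| ∂μ := by
    rw [cumulative, abs_of_nonneg (integral_nonneg fun _ => abs_nonneg _)]
    exact setIntegral_le_integral hk.abs (ae_of_all _ fun _ => abs_nonneg _)
  refine boundedVariationOn_of_edist_le ((hmono.monotoneOn s).boundedVariationOn hbdd)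
    fun x _ y _ hxy => ?_
  have hdiff {f : X → ℝ} (hf : Integrable f μ) : cumulative g f μ y - cumulative g f μ x =
      ∫ z in {z | g z ≤ y} \ {z | g z ≤ x}, f z ∂μ :=
    (setIntegral_sdiff (measurableSet_le hg measurable_const) hf.integrableOn
      fun z (hz : g z ≤ x) => hz.trans hxy).symm
  rw [edist_dist, edist_dist, Real.dist_eq, Real.dist_eq, hdiff hk, hdiff hk.abs]
  exact ENNReal.ofReal_le_ofReal (abs_integral_le_integral_abs.trans (le_abs_self _))

end Cumulative

theorem hasMeasureDerivOn_of_monotone {p : ℝ → ℝ} (hp : Monotone p) (a b : ℝ) :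
    HasMeasureDerivOn (Ioo a b) 1 p 0 (hp.stieltjesFunction.measure.restrict (Ioo a b)) 1 := by
  set f := hp.stieltjesFunction
  set μ := f.measure.restrict (Ioo a b)
  have : IsFiniteMeasure μ := ⟨by
    rw [Measure.restrict_apply_univ]
    exact (measure_mono Ioo_subset_Ioc_self).trans_lt (by simp)⟩
  have hcum : ∀ᵐ t ∂volume.restrict (Ioo a b), p t = cumulative id 1 μ t + f a := by
    have hpf : ∀ᵐ t, p t = f t := by
      filter_upwards [compl_mem_ae_iff.2 (hp.countable_not_continuousAt.measure_zero volume)]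
        with t ht
      rw [hp.stieltjesFunction_eq]
      exact (not_not.1 ht).continuousWithinAt.rightLim_eq.symm
    filter_upwards [ae_restrict_mem measurableSet_Ioo, ae_restrict_of_ae hpf] with t ht htf
    have hμ : μ {x | id x ≤ t} = ENNReal.ofReal (f t - f a) := by
      have hset : {x | id x ≤ t} ∩ Ioo a b = Ioc a t := by grind
      rw [Measure.restrict_apply (measurableSet_le measurable_id measurable_const), hset,
        StieltjesFunction.measure_Ioc]
    simp only [cumulative, Pi.one_apply]
    rw [setIntegral_const, measureReal_def, hμ,
      ENNReal.toReal_ofReal (sub_nonneg.2 (f.mono ht.1.le)), htf]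
    simp
  refine ⟨integrableOn_Ioo_of_monotone hp a b, integrable_zero _ _ _, integrable_const 1,
    fun φ hφ => ?_⟩
  have hint := integrableOn_Ioo_of_boundedVariationOn
    (boundedVariationOn_cumulative (k := 1) (integrable_const 1 (μ := μ)) measurable_id (Ioo a b))
  simp only [fderiv_apply_one_eq_deriv, Pi.zero_apply, Pi.one_apply, mul_zero, mul_one,
    integral_zero, neg_zero, zero_sub]
  rw [integral_congr_ae (hcum.mono fun t ht => congrArg (· * deriv φ t) ht)]
  simp only [add_mul]
  rw [integral_add (hφ.deriv.integrable_mul_right hint)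
      (hφ.deriv.integrable_mul_right (integrable_const _)),
    hφ.deriv.setIntegral_mul, hφ.deriv.setIntegral_mul, integral_const_mul,
    hφ.integral_deriv_eq_zero,
    integral_cumulative_mul_deriv (k := 1) (integrable_const 1) measurable_id
      (hφ.contDiff.of_le (by simp)) hφ.hasCompactSupport]
  simp

theorem exists_hasMeasureDerivOn_of_boundedVariationOn {ϑ : ℝ → ℝ} {a b : ℝ}
    (hϑ : BoundedVariationOn ϑ (Ioo a b)) :
    ∃ (γ : ℝ → ℝ) (τ : Measure ℝ) (H : ℝ → ℝ), IsFiniteMeasure τ ∧ τ ⟂ₘ volume ∧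
      τ (Ioo a b)ᶜ = 0 ∧ HasMeasureDerivOn (Ioo a b) 1 ϑ γ τ H := by
  obtain ⟨p, q, hp, hq, heq⟩ := exists_monotone_eqOn_sub_of_boundedVariationOn hϑ
  set μ := hp.stieltjesFunction.measure + hq.stieltjesFunction.measure
  set ν := μ.restrict (Ioo a b)
  have hfin : IsFiniteMeasure ν := ⟨by
    rw [Measure.restrict_apply_univ]
    exact (measure_mono Ioo_subset_Ioc_self).trans_lt (by simp [μ])⟩
  have hν : ν (Ioo a b)ᶜ = 0 := by
    rw [Measure.restrict_apply measurableSet_Ioo.compl, compl_inter_self, measure_empty]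
  have hpν := (hasMeasureDerivOn_of_monotone hp a b).of_absolutelyContinuous (τ := ν)
    ((Measure.AbsolutelyContinuous.rfl.add_right _).restrict _)
  have hqν := (hasMeasureDerivOn_of_monotone hq a b).of_absolutelyContinuous (τ := ν)
    ((Measure.absolutelyContinuous_of_le (Measure.le_add_left le_rfl)).restrict _)
  refine ⟨_, ν.singularPart volume, _, ⟨?_⟩, ν.mutuallySingular_singularPart volume, ?_,
    ((hpν.sub hqν).congr ?_ .rfl .rfl).singularPart⟩
  · exact (ν.singularPart_le volume _).trans_lt (measure_lt_top ν _)
  · exact le_antisymm ((ν.singularPart_le volume _).trans hν.le) zero_le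
  · exact (ae_restrict_mem measurableSet_Ioo).mono fun t ht => (heq ht).symm

section Product

theorem ae_eq_zero_of_forall_setIntegral_prod_eq_zero {X Y : Type*} [MeasurableSpace X]
    [MeasurableSpace Y] {μ : Measure X} {ν : Measure Y} {f : X × Y → ℝ}
    (hf : Integrable f (μ.prod ν))
    (h : ∀ A B, MeasurableSet A → MeasurableSet B → ∫ z in A ×ˢ B, f z ∂μ.prod ν = 0) :
    ∀ᵐ z ∂μ.prod ν, f z = 0 := by
  refine hf.ae_eq_zero_of_forall_setIntegral_eq_zero fun S hS hSfin => ?_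
  clear hSfin
  induction S, hS using MeasurableSpace.induction_on_inter generateFrom_prod.symm
    isPiSystem_prod with
  | empty => simp
  | basic t ht =>
    obtain ⟨A, hA, B, hB, rfl⟩ := ht
    exact h A B hA hB
  | compl t ht iht =>
    have huniv := h univ univ .univ .univ
    rw [univ_prod_univ, Measure.restrict_univ] at huniv
    rw [setIntegral_compl ht hf, huniv, iht, sub_zero]
  | iUnion s hd hm ih =>
    rw [integral_iUnion hm hd hf.integrableOn]
    simp only [ih, tsum_zero]

variable {E F : Type*} [NormedAddCommGroup E] [NormedSpace ℝ E] [FiniteDimensional ℝ E]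
  [MeasurableSpace E] [BorelSpace E] [NormedAddCommGroup F] [NormedSpace ℝ F]
  [FiniteDimensional ℝ F] [MeasurableSpace F] [BorelSpace F]

theorem ae_eq_zero_of_forall_integral_tensor_eq_zero {μ : Measure E} {ν : Measure F} [SFinite μ]
    [SFinite ν] {U : Set E} {V : Set F} (hU : IsOpen U) (hV : IsOpen V) {f : E × F → ℝ}
    (hf : Integrable f ((μ.restrict U).prod (ν.restrict V)))
    (h : ∀ p q, IsTestFunctionOn U p → IsTestFunctionOn V q →
      ∫ z, f z * (p z.1 * q z.2) ∂(μ.restrict U).prod (ν.restrict V) = 0) :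
    ∀ᵐ z ∂(μ.restrict U).prod (ν.restrict V), f z = 0 := by
  have hslice (q) (hq : IsTestFunctionOn V q) :
      ∀ᵐ x ∂μ.restrict U, ∫ y, f (x, y) * q y ∂ν.restrict V = 0 := by
    have hfq := hq.integrable_mul_comp hf measurable_snd
    refine ae_eq_zero_of_forall_integral_mul_eq_zero hU hfq.integral_prod_left fun p hp => ?_
    rw [← h p q hp hq]
    simp only [mul_comm (p _), ← mul_assoc]
    rw [integral_prod _ (hp.integrable_mul_comp hfq measurable_fst)]
    simp only [integral_mul_const]
  refine ae_eq_zero_of_forall_setIntegral_prod_eq_zero hf fun A B _ _ => ?_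
  have hfA : Integrable f (((μ.restrict U).restrict A).prod (ν.restrict V)) :=
    hf.mono_measure (Measure.prod_mono Measure.restrict_le_self le_rfl)
  have hmean : ∀ᵐ y ∂ν.restrict V, ∫ x in A, f (x, y) ∂μ.restrict U = 0 := by
    refine ae_eq_zero_of_forall_integral_mul_eq_zero hV hfA.integral_prod_right fun q hq => ?_
    simp only [← integral_mul_const]
    rw [← integral_integral_swap (f := fun x y => f (x, y) * q y)
      (hq.integrable_mul_comp hfA measurable_snd)]
    exact integral_eq_zero_of_ae (ae_restrict_of_ae (hslice q hq))
  rw [← Measure.prod_restrict, integral_prod_symm _ (by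
    rw [Measure.prod_restrict]; exact hf.integrableOn)]
  exact integral_eq_zero_of_ae (ae_restrict_of_ae hmean)

end Product

section Plane

/-- The rectangle with sides `I` and `J`, as a subset of `V2`. -/
def box (I J : Set ℝ) : Set V2 := {x | x 0 ∈ I ∧ x 1 ∈ J}

/-- The product measure on `V2` of two measures on the line. -/
def planeProd (μ ν : Measure ℝ) : Measure V2 := (μ.prod ν).map MeasurableEquiv.finTwoArrow.symm

variable {I J : Set ℝ} {μ ν : Measure ℝ}

theorem isBounded_box (hI : Bornology.IsBounded I) (hJ : Bornology.IsBounded J) :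
    Bornology.IsBounded (box I J) := by
  refine Bornology.forall_isBounded_image_eval_iff.1 (Fin.forall_fin_two.2 ⟨?_, ?_⟩)
  · exact hI.subset (image_subset_iff.2 fun _ hx => hx.1)
  · exact hJ.subset (image_subset_iff.2 fun _ hx => hx.2)

theorem planeProd_restrict (I J : Set ℝ) :
    planeProd (volume.restrict I) (volume.restrict J) = volume.restrict (box I J) := by
  rw [planeProd, Measure.prod_restrict]
  exact ((volume_preserving_finTwoArrow ℝ).symm.restrict_preimage_emb
    MeasurableEquiv.finTwoArrow.symm.measurableEmbedding (box I J)).map_eq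

theorem ae_planeProd_iff {P : V2 → Prop} :
    (∀ᵐ x ∂planeProd μ ν, P x) ↔ ∀ᵐ z ∂μ.prod ν, P ![z.1, z.2] :=
  MeasurableEquiv.finTwoArrow.symm.measurableEmbedding.ae_map_iff

theorem integrable_planeProd_iff {f : V2 → ℝ} :
    Integrable f (planeProd μ ν) ↔ Integrable (fun z : ℝ × ℝ => f ![z.1, z.2]) (μ.prod ν) :=
  MeasurableEquiv.finTwoArrow.symm.measurableEmbedding.integrable_map_iff

theorem integral_planeProd (f : V2 → ℝ) :
    ∫ x, f x ∂planeProd μ ν = ∫ z, f ![z.1, z.2] ∂μ.prod ν :=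
  MeasurableEquiv.finTwoArrow.symm.measurableEmbedding.integral_map f

theorem integrable_planeProd_comp_snd [IsFiniteMeasure μ] [SFinite ν] {f : ℝ → ℝ}
    (hf : Integrable f ν) : Integrable (fun x => f (x 1)) (planeProd μ ν) :=
  integrable_planeProd_iff.2 (hf.comp_snd μ)

theorem integral_planeProd_mul [SFinite μ] [SFinite ν] (f g : ℝ → ℝ) :
    ∫ x, f (x 0) * g (x 1) ∂planeProd μ ν = (∫ s, f s ∂μ) * ∫ t, g t ∂ν :=
  (integral_planeProd _).trans (integral_prod_mul f g)

namespace IsTestFunctionOn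

variable {p q : ℝ → ℝ}

theorem tensor (hp : IsTestFunctionOn I p) (hq : IsTestFunctionOn J q) :
    IsTestFunctionOn (box I J) fun x => p (x 0) * q (x 1) := by
  have hsupp : tsupport (fun x : V2 => p (x 0) * q (x 1)) ⊆ box (tsupport p) (tsupport q) :=
    closure_minimal
      (fun x hx => ⟨subset_closure (left_ne_zero_of_mul hx),
        subset_closure (right_ne_zero_of_mul hx)⟩)
      (((isClosed_tsupport p).prod (isClosed_tsupport q)).preimage
        Homeomorph.finTwoArrow.continuous)
  have hcompact : IsCompact (box (tsupport p) (tsupport q)) :=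
    Homeomorph.finTwoArrow.isCompact_preimage.2 (hp.hasCompactSupport.isCompact.prod
      hq.hasCompactSupport.isCompact)
  exact ⟨(hp.contDiff.comp (contDiff_apply ℝ ℝ 0)).mul (hq.contDiff.comp (contDiff_apply ℝ ℝ 1)),
    hcompact.of_isClosed_subset (isClosed_tsupport _) hsupp,
    hsupp.trans fun x hx => ⟨hp.tsupport_subset hx.1, hq.tsupport_subset hx.2⟩⟩

theorem fderiv_tensor_apply (hp : IsTestFunctionOn I p) (hq : IsTestFunctionOn J q) (x v : V2) :
    fderiv ℝ (fun x : V2 => p (x 0) * q (x 1)) x v =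
      v 0 * (deriv p (x 0) * q (x 1)) + v 1 * (p (x 0) * deriv q (x 1)) := by
  have hp' := (hp.differentiable (x 0)).hasDerivAt.comp_hasFDerivAt x
    (hasFDerivAt_apply (𝕜 := ℝ) (F' := fun _ : Fin 2 => ℝ) 0 x)
  have hq' := (hq.differentiable (x 1)).hasDerivAt.comp_hasFDerivAt x
    (hasFDerivAt_apply (𝕜 := ℝ) (F' := fun _ : Fin 2 => ℝ) 1 x)
  refine (DFunLike.congr_fun (hp'.mul hq').fderiv v).trans ?_
  simp only [add_apply, smul_apply,
    ContinuousLinearMap.proj_apply, smul_eq_mul, Function.comp_apply]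
  ring

end IsTestFunctionOn

theorem ae_eq_zero_of_forall_integral_box_tensor_eq_zero (hI : IsOpen I) (hJ : IsOpen J)
    {f : V2 → ℝ} (hf : IntegrableOn f (box I J))
    (h : ∀ p q, IsTestFunctionOn I p → IsTestFunctionOn J q →
      ∫ x in box I J, f x * (p (x 0) * q (x 1)) = 0) :
    ∀ᵐ x ∂volume.restrict (box I J), f x = 0 := by
  rw [IntegrableOn, ← planeProd_restrict, integrable_planeProd_iff] at hf
  simp only [← planeProd_restrict, integral_planeProd] at h
  rw [← planeProd_restrict, ae_planeProd_iff]
  exact ae_eq_zero_of_forall_integral_tensor_eq_zero hI hJ hf h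

theorem exists_ae_eq_const_of_integral_mul_deriv_eq_zero (hI : IsOpen I) (hI' : I.OrdConnected)
    (hJ : IsOpen J) (hJ' : J.OrdConnected) (hJne : J.Nonempty) (hfin : volume (box I J) ≠ ⊤)
    {A : ℝ → ℝ} (hA : IsTestFunctionOn I A) (hA1 : ∫ s, A s = 1)
    {f : V2 → ℝ} (hf : IntegrableOn f (box I J))
    (h₀ : ∀ P q, IsTestFunctionOn I P → IsTestFunctionOn J q →
      ∫ x in box I J, f x * (deriv P (x 0) * q (x 1)) = 0)
    (h₁ : ∀ Q, IsTestFunctionOn J Q → ∫ x in box I J, f x * (A (x 0) * deriv Q (x 1)) = 0) :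
    ∃ c, ∀ᵐ x ∂volume.restrict (box I J), f x = c := by
  obtain ⟨B, hB, hB1⟩ := IsTestFunctionOn.exists_integral_eq_one hJ hJne
  set c := ∫ x in box I J, f x * (A (x 0) * B (x 1))
  have hc : IntegrableOn (fun _ : V2 => c) (box I J) := integrableOn_const hfin
  refine ⟨c, (ae_eq_zero_of_forall_integral_box_tensor_eq_zero hI hJ (f := fun x => f x - c)
    (hf.sub hc) fun p q hp hq => ?_).mono fun x => sub_eq_zero.1⟩
  obtain ⟨P, hP, hpP⟩ := hp.exists_eq_integral_mul_add_deriv hI' hA hA1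
  obtain ⟨Q, hQ, hqQ⟩ := hq.exists_eq_integral_mul_add_deriv hJ' hB hB1
  have hAQ : ∫ x in box I J, f x * (A (x 0) * q (x 1)) = (∫ t, q t) * c := by
    have hsplit (x : V2) : f x * (A (x 0) * q (x 1)) =
        (∫ t, q t) * (f x * (A (x 0) * B (x 1))) + f x * (A (x 0) * deriv Q (x 1)) := by
      rw [hqQ]; ring
    simp only [hsplit]
    rw [integral_add (((hA.tensor hB).integrable_mul_right hf).const_mul _)
      ((hA.tensor hQ.deriv).integrable_mul_right hf), integral_const_mul, h₁ Q hQ, add_zero]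
  have hfpq : ∫ x in box I J, f x * (p (x 0) * q (x 1)) = (∫ s, p s) * ((∫ t, q t) * c) := by
    have hsplit (x : V2) : f x * (p (x 0) * q (x 1)) =
        (∫ s, p s) * (f x * (A (x 0) * q (x 1))) + f x * (deriv P (x 0) * q (x 1)) := by
      rw [hpP]; ring
    simp only [hsplit]
    rw [integral_add (((hA.tensor hq).integrable_mul_right hf).const_mul _)
      ((hP.deriv.tensor hq).integrable_mul_right hf), integral_const_mul, hAQ, h₀ P q hP hq,
      add_zero]
  have hcpq : ∫ x in box I J, c * (p (x 0) * q (x 1)) = c * ((∫ s, p s) * ∫ t, q t) := by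
    rw [integral_const_mul, ← planeProd_restrict, integral_planeProd_mul, hp.setIntegral,
      hq.setIntegral]
  simp only [sub_mul]
  rw [integral_sub ((hp.tensor hq).integrable_mul_right hf)
    ((hp.tensor hq).integrable_mul_right hc), hfpq, hcpq]
  ring

end Plane

section Slicing

theorem IsTestFunctionOn.comp_update {ι : Type*} [Fintype ι] [DecidableEq ι] {U : Set (ι → ℝ)}
    {φ : (ι → ℝ) → ℝ} (hφ : IsTestFunctionOn U φ) (x : ι → ℝ) (j : ι) :
    IsTestFunctionOn (Function.update x j ⁻¹' U) fun t => φ (Function.update x j t) where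
  contDiff := hφ.contDiff.comp (contDiff_update _ x j)
  hasCompactSupport := hφ.hasCompactSupport.comp_isClosedEmbedding (isClosedEmbedding_update x j)
  tsupport_subset := (tsupport_comp_subset_preimage φ
    (continuous_const.update j continuous_id)).trans (preimage_mono hφ.tsupport_subset)

theorem IsTestFunctionOn.deriv_comp_update {ι : Type*} [Fintype ι] [DecidableEq ι]
    {U : Set (ι → ℝ)} {φ : (ι → ℝ) → ℝ} (hφ : IsTestFunctionOn U φ) (x : ι → ℝ) (j : ι) (t : ℝ) :
    deriv (fun t => φ (Function.update x j t)) t =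
      fderiv ℝ φ (Function.update x j t) (Pi.single j 1) :=
  ((hφ.differentiable _).hasFDerivAt.comp_hasDerivAt t (hasDerivAt_update x j t)).deriv

variable {I J : Set ℝ} {φ : V2 → ℝ} {ϑ γ H : ℝ → ℝ} {μ τ : Measure ℝ}

theorem IsTestFunctionOn.slice_fst (hφ : IsTestFunctionOn (box I J) φ) (t : ℝ) :
    IsTestFunctionOn I (fun s => φ ![s, t]) ∧
      ∀ s, deriv (fun s => φ ![s, t]) s = fderiv ℝ φ ![s, t] (Pi.single 0 1) := by
  have hupd (s) : Function.update ![0, t] 0 s = ![s, t] := by ext i; fin_cases i <;> rfl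
  have htest := hφ.comp_update ![0, t] 0
  have hderiv := hφ.deriv_comp_update ![0, t] 0
  simp only [hupd] at htest hderiv
  exact ⟨htest.mono fun s hs => by simpa using hs.1, hderiv⟩

theorem IsTestFunctionOn.slice_snd (hφ : IsTestFunctionOn (box I J) φ) (s : ℝ) :
    IsTestFunctionOn J (fun t => φ ![s, t]) ∧
      ∀ t, deriv (fun t => φ ![s, t]) t = fderiv ℝ φ ![s, t] (Pi.single 1 1) := by
  have hupd (t) : Function.update ![s, 0] 1 t = ![s, t] := by ext i; fin_cases i <;> rfl
  have htest := hφ.comp_update ![s, 0] 1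
  have hderiv := hφ.deriv_comp_update ![s, 0] 1
  simp only [hupd] at htest hderiv
  exact ⟨htest.mono fun t ht => by simpa using ht.2, hderiv⟩

theorem integrableOn_box_comp_snd (hI : volume I ≠ ⊤) (hϑ : IntegrableOn ϑ J) :
    IntegrableOn (fun x => ϑ (x 1)) (box I J) := by
  have : IsFiniteMeasure (volume.restrict I) := isFiniteMeasure_restrict.2 hI
  rw [IntegrableOn, ← planeProd_restrict]
  exact integrable_planeProd_comp_snd hϑ

theorem hasMeasureDerivOn_box_single_zero_comp_snd (hI : volume I ≠ ⊤) (hϑ : IntegrableOn ϑ J)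
    (σ : Measure V2) :
    HasMeasureDerivOn (box I J) (Pi.single 0 1) (fun x => ϑ (x 1)) 0 σ 0 := by
  have hint := integrableOn_box_comp_snd hI hϑ
  refine ⟨hint, integrable_zero _ _ _, integrable_zero _ _ _, fun φ hφ => ?_⟩
  have hϑφ := (hφ.fderiv_apply (Pi.single 0 1)).integrable_mul_right hint
  simp only [Pi.zero_apply, mul_zero, integral_zero, neg_zero, sub_zero]
  rw [← planeProd_restrict] at hϑφ ⊢
  rw [integral_planeProd, integral_prod_symm _ (integrable_planeProd_iff.1 hϑφ)]
  refine integral_eq_zero_of_ae (ae_of_all _ fun t => ?_)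
  obtain ⟨hslice, hderiv⟩ := hφ.slice_fst t
  simp [integral_const_mul, ← hderiv, hslice.deriv.setIntegral, hslice.integral_deriv_eq_zero]

theorem HasMeasureDerivOn.box_single_one_comp_snd [SFinite τ] (hI : volume I ≠ ⊤)
    (h : HasMeasureDerivOn J 1 ϑ γ τ H) :
    HasMeasureDerivOn (box I J) (Pi.single 1 1) (fun x => ϑ (x 1)) (fun x => γ (x 1))
      (planeProd (volume.restrict I) τ) fun x => H (x 1) := by
  have : IsFiniteMeasure (volume.restrict I) := isFiniteMeasure_restrict.2 hI
  have hϑ := integrableOn_box_comp_snd hI h.integrableOn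
  have hγ := integrableOn_box_comp_snd hI h.integrableOn_density
  have hH := integrable_planeProd_comp_snd (μ := volume.restrict I) h.integrable_density
  refine ⟨hϑ, hγ, hH, fun φ hφ => ?_⟩
  have hϑφ := (hφ.fderiv_apply (Pi.single 1 1)).integrable_mul_right hϑ
  have hφγ := hφ.integrable_mul_left hγ
  have hφH := hφ.integrable_mul_left hH
  rw [← planeProd_restrict] at hϑφ hφγ ⊢
  rw [integrable_planeProd_iff] at hϑφ hφγ hφH
  simp only [integral_planeProd]
  rw [integral_prod _ hϑφ, integral_prod _ hφγ, integral_prod _ hφH, ← integral_neg,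
    ← integral_sub (by exact hφγ.integral_prod_left.neg) hφH.integral_prod_left]
  congr with s
  obtain ⟨hslice, hderiv⟩ := hφ.slice_snd s
  simpa [← hderiv] using h.integral_mul_fderiv _ hslice

theorem planeProd_compl_box_eq_zero (hμ : μ Iᶜ = 0) (hτ : τ Jᶜ = 0) :
    planeProd μ τ (box I J)ᶜ = 0 := by
  rw [← mem_ae_iff] at hμ hτ
  refine ae_planeProd_iff.2 ?_
  filter_upwards [Measure.quasiMeasurePreserving_fst.ae hμ,
    Measure.quasiMeasurePreserving_snd.ae hτ] with z h₁ h₂ using ⟨h₁, h₂⟩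

theorem planeProd_mutuallySingular_volume (hτ : τ ⟂ₘ volume) :
    planeProd μ τ ⟂ₘ volume := by
  obtain ⟨S, hS, hτS, hS'⟩ := hτ
  refine ⟨{x | x 1 ∈ S}, measurable_pi_apply 1 hS, ?_, ?_⟩
  · have h : ∀ᵐ t ∂τ, t ∉ S := measure_eq_zero_iff_ae_notMem.1 hτS
    exact measure_eq_zero_iff_ae_notMem.2
      (ae_planeProd_iff.2 (Measure.quasiMeasurePreserving_snd.ae h))
  · exact (Measure.quasiMeasurePreserving_eval (fun _ : Fin 2 => (volume : Measure ℝ))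
      1).preimage_null hS'

end Slicing

section Polar

theorem abs_apply_le_mnorm (M : Mat2) (i j : Fin 2) : |M i j| ≤ mnorm M := by
  refine Real.abs_le_sqrt ?_
  calc M i j ^ 2 ≤ ∑ j, M i j ^ 2 :=
        Finset.single_le_sum (fun j _ => sq_nonneg (M i j)) (Finset.mem_univ j)
    _ ≤ ∑ i, ∑ j, M i j ^ 2 :=
        Finset.single_le_sum (f := fun i => ∑ j, M i j ^ 2)
          (fun i _ => Finset.sum_nonneg fun j _ => sq_nonneg (M i j)) (Finset.mem_univ i)

theorem mnorm_nonneg (M : Mat2) : 0 ≤ mnorm M :=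
  Real.sqrt_nonneg _

theorem mnorm_le_sum_abs (M : Mat2) : mnorm M ≤ ∑ i, ∑ j, |M i j| := by
  refine Real.sqrt_le_iff.2 ⟨by positivity, ?_⟩
  simp only [← sq_abs (M _ _)]
  calc ∑ i, ∑ j, |M i j| ^ 2 ≤ ∑ i, (∑ j, |M i j|) ^ 2 := Finset.sum_le_sum fun i _ =>
        Finset.sum_sq_le_sq_sum_of_nonneg fun j _ => abs_nonneg (M i j)
    _ ≤ (∑ i, ∑ j, |M i j|) ^ 2 := Finset.sum_sq_le_sq_sum_of_nonneg fun i _ => by positivity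

theorem mnorm_smul (c : ℝ) (M : Mat2) : mnorm (c • M) = |c| * mnorm M := by
  simp only [mnorm, Matrix.smul_apply, smul_eq_mul, mul_pow, ← Finset.mul_sum]
  rw [Real.sqrt_mul (sq_nonneg c), Real.sqrt_sq_eq_abs]

theorem mnorm_outer_e2 (v : V2) : mnorm (outer v e2) = vnorm v := by
  simp [mnorm, vnorm, outer, e2, Fin.sum_univ_two]

variable {Ω : Set V2} {u : V2 → V2} {gu h : V2 → Mat2} {σ : Measure V2}

theorem integrable_mnorm (hh : ∀ i j, Integrable (fun x => h x i j) σ) :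
    Integrable (fun x => mnorm (h x)) σ := by
  have hmeas : AEStronglyMeasurable (fun x => mnorm (h x)) σ :=
    Real.continuous_sqrt.comp_aestronglyMeasurable <| (Finset.aestronglyMeasurable_fun_sum _
      fun i _ => Finset.aestronglyMeasurable_fun_sum _ fun j _ =>
        (hh i j).aestronglyMeasurable.pow 2)
  have hsum : Integrable (fun x => ∑ i, ∑ j, |h x i j|) σ :=
    integrable_finsetSum _ fun i _ => integrable_finsetSum _ fun j _ => (hh i j).abs
  exact hsum.mono' hmeas (ae_of_all _ fun x =>
    (abs_of_nonneg (mnorm_nonneg _)).trans_le (mnorm_le_sum_abs _))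

theorem hasBVDerivOn_withDensity_mnorm (hperp : σ ⟂ₘ volume)
    (hconc : σ Ωᶜ = 0) (hu : ∀ i j, HasMeasureDerivOn Ω (Pi.single j 1) (fun x => u x i)
      (fun x => gu x i j) σ fun x => h x i j) :
    HasBVDerivOn Ω u gu (σ.withDensity fun x => ENNReal.ofReal (mnorm (h x)))
      fun x => (mnorm (h x))⁻¹ • h x := by
  have hh : Integrable (fun x => mnorm (h x)) σ :=
    integrable_mnorm fun i j => (hu i j).integrable_density
  have hmeas : AEMeasurable (fun x => ENNReal.ofReal (mnorm (h x))) σ :=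
    hh.aemeasurable.ennreal_ofReal
  have hac := withDensity_absolutelyContinuous σ fun x => ENNReal.ofReal (mnorm (h x))
  refine ⟨?_, fun i j => (hu i j).integrableOn_density, ?_, hac hconc, hperp.mono_ac hac .rfl,
    fun i j => ?_, ?_, fun φ hφ hφc hφΩ i j => ?_⟩
  · exact Integrable.of_eval fun i => (hu i 0).integrableOn
  · have := isFiniteMeasure_withDensity_ofReal hh.2
    exact measure_ne_top _ _
  · exact ((hh.aemeasurable.inv.mul (hu i j).integrable_density.aemeasurable).mono_ac hac)
  · refine (ae_withDensity_iff' hmeas).2 (ae_of_all _ fun x hx => ?_)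
    have hpos : 0 < mnorm (h x) := ENNReal.ofReal_pos.1 (pos_iff_ne_zero.2 hx)
    rw [mnorm_smul, abs_of_pos (inv_pos.2 hpos), inv_mul_cancel₀ hpos.ne']
  · have hpolar (x) : mnorm (h x) * (φ x * ((mnorm (h x))⁻¹ * h x i j)) = φ x * h x i j := by
      rcases eq_or_ne (mnorm (h x)) 0 with h0 | h0
      · have hzero : h x i j = 0 := abs_nonpos_iff.1 (h0 ▸ abs_apply_le_mnorm (h x) i j)
        simp [hzero]
      · field_simp
    rw [integral_withDensity_eq_integral_toReal_smul₀ hmeas (by simp)]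
    simp only [ENNReal.toReal_ofReal (mnorm_nonneg _), Matrix.smul_apply, smul_eq_mul, hpolar]
    exact (hu i j).integral_mul_fderiv φ ⟨hφ, hφc, hφΩ⟩

theorem HasBVDerivOn.hasMeasureDerivOn {gs : V2 → Mat2} (hu : HasBVDerivOn Ω u gu σ gs)
    (i j : Fin 2) : HasMeasureDerivOn Ω (Pi.single j 1) (fun x => u x i) (fun x => gu x i j) σ
      fun x => gs x i j where
  integrableOn := hu.int_u.eval i
  integrableOn_density := hu.int_gu i j
  integrable_density := by
    have : IsFiniteMeasure σ := ⟨hu.fin.lt_top⟩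
    refine .of_bound (hu.meas_gs i j).aestronglyMeasurable 1 (hu.unit.mono fun x hx => ?_)
    exact hx ▸ abs_apply_le_mnorm (gs x) i j
  integral_mul_fderiv φ hφ := hu.ibp φ hφ.contDiff hφ.hasCompactSupport hφ.tsupport_subset i j

end Polar

section AveragedPrimitive

/-- A primitive, in the second coordinate, of the measure `h ℒ + k σ` on `Ω` averaged with weight
`A` over the first. If `∂₂v = h ℒ + k σ` and `∂₁v = 0`, this recovers `v` up to a constant. -/
def averagedPrimitive (A : ℝ → ℝ) (Ω : Set V2) (h : V2 → ℝ) (σ : Measure V2) (k : V2 → ℝ) (t : ℝ) :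
    ℝ :=
  cumulative (fun x => x 1) (fun x => h x * A (x 0)) (volume.restrict Ω) t +
    cumulative (fun x => x 1) (fun x => k x * A (x 0)) σ t

variable {I : Set ℝ} {A : ℝ → ℝ} {Ω : Set V2} {v h k : V2 → ℝ} {σ : Measure V2}

theorem averagedPrimitive_const_mul (r t : ℝ) :
    averagedPrimitive A Ω (fun x => r * h x) σ (fun x => r * k x) t =
      r * averagedPrimitive A Ω h σ k t := by
  simp only [averagedPrimitive, cumulative, mul_assoc, integral_const_mul, mul_add]

theorem boundedVariationOn_averagedPrimitive (hA : IsTestFunctionOn I A) (hh : IntegrableOn h Ω)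
    (hk : Integrable k σ) (s : Set ℝ) : BoundedVariationOn (averagedPrimitive A Ω h σ k) s :=
  boundedVariationOn_add
    (boundedVariationOn_cumulative (hA.integrable_mul_comp hh (measurable_pi_apply 0))
      (measurable_pi_apply 1) s)
    (boundedVariationOn_cumulative (hA.integrable_mul_comp hk (measurable_pi_apply 0))
      (measurable_pi_apply 1) s)

theorem setIntegral_averagedPrimitive_mul_deriv [SFinite σ] (hA : IsTestFunctionOn I A)
    (hh : IntegrableOn h Ω) (hk : Integrable k σ) {c d : ℝ} {Q : ℝ → ℝ}
    (hQ : IsTestFunctionOn (Ioo c d) Q) :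
    ∫ t in Ioo c d, averagedPrimitive A Ω h σ k t * deriv Q t =
      (-∫ x in Ω, A (x 0) * Q (x 1) * h x) - ∫ x, A (x 0) * Q (x 1) * k x ∂σ := by
  have hhA := hA.integrable_mul_comp hh (measurable_pi_apply 0)
  have hkA := hA.integrable_mul_comp hk (measurable_pi_apply 0)
  have hQ1 : ContDiff ℝ 1 Q := hQ.contDiff.of_le (by simp)
  have hint {μ : Measure V2} {f : V2 → ℝ} (hf : Integrable f μ) :
      IntegrableOn (fun t => cumulative (fun x => x 1) f μ t * deriv Q t) (Ioo c d) :=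
    hQ.deriv.integrable_mul_right <| integrableOn_Ioo_of_boundedVariationOn <|
      boundedVariationOn_cumulative hf (measurable_pi_apply 1) _
  simp only [averagedPrimitive, add_mul]
  rw [integral_add (hint hhA) (hint hkA), hQ.deriv.setIntegral_mul, hQ.deriv.setIntegral_mul,
    integral_cumulative_mul_deriv hhA (measurable_pi_apply 1) hQ1 hQ.hasCompactSupport,
    integral_cumulative_mul_deriv hkA (measurable_pi_apply 1) hQ1 hQ.hasCompactSupport,
    ← sub_eq_add_neg]
  simp only [mul_assoc, mul_comm]

theorem exists_ae_eq_averagedPrimitive_add_const [SFinite σ] {a b c d : ℝ} (hcd : c < d)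
    (hA : IsTestFunctionOn (Ioo a b) A) (hA1 : ∫ s, A s = 1)
    (h₀ : HasMeasureDerivOn (box (Ioo a b) (Ioo c d)) (Pi.single 0 1) v 0 σ 0)
    (h₁ : HasMeasureDerivOn (box (Ioo a b) (Ioo c d)) (Pi.single 1 1) v h σ k) :
    ∃ C, ∀ᵐ x ∂volume.restrict (box (Ioo a b) (Ioo c d)),
      v x = averagedPrimitive A (box (Ioo a b) (Ioo c d)) h σ k (x 1) + C := by
  set Ω := box (Ioo a b) (Ioo c d)
  set Θ := averagedPrimitive A Ω h σ k
  have hΘ : IntegrableOn Θ (Ioo c d) := integrableOn_Ioo_of_boundedVariationOn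
    (boundedVariationOn_averagedPrimitive hA h₁.integrableOn_density h₁.integrable_density _)
  have hdiff := h₀.sub (hasMeasureDerivOn_box_single_zero_comp_snd measure_Ioo_lt_top.ne hΘ σ)
  have hhoriz (p q) (hp : IsTestFunctionOn (Ioo a b) p) (hq : IsTestFunctionOn (Ioo c d) q) :
      ∫ x in Ω, (v x - Θ (x 1)) * (deriv p (x 0) * q (x 1)) = 0 := by
    simpa [hp.fderiv_tensor_apply hq] using hdiff.integral_mul_fderiv _ (hp.tensor hq)
  have hvert (q) (hq : IsTestFunctionOn (Ioo c d) q) :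
      ∫ x in Ω, (v x - Θ (x 1)) * (A (x 0) * deriv q (x 1)) = 0 := by
    have hv := h₁.integral_mul_fderiv _ (hA.tensor hq)
    have hΘq : ∫ x in Ω, Θ (x 1) * (A (x 0) * deriv q (x 1)) =
        ∫ t in Ioo c d, Θ t * deriv q t := by
      simp only [mul_left_comm (Θ _), Ω]
      rw [← planeProd_restrict, integral_planeProd_mul A fun t => Θ t * deriv q t, hA.setIntegral,
        hA1, one_mul]
    have hAq := hA.tensor hq.deriv
    simp only [hA.fderiv_tensor_apply hq, Pi.single_eq_same, one_mul] at hv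
    simp only [sub_mul]
    rw [integral_sub (hAq.integrable_mul_right h₀.integrableOn)
      (hAq.integrable_mul_right (integrableOn_box_comp_snd measure_Ioo_lt_top.ne hΘ)), hΘq,
      setIntegral_averagedPrimitive_mul_deriv hA h₁.integrableOn_density h₁.integrable_density hq]
    simpa [sub_eq_zero] using hv
  obtain ⟨C, hC⟩ := exists_ae_eq_const_of_integral_mul_deriv_eq_zero isOpen_Ioo ordConnected_Ioo
    isOpen_Ioo ordConnected_Ioo (nonempty_Ioo.2 hcd)
    (isBounded_box (Metric.isBounded_Ioo _ _) (Metric.isBounded_Ioo _ _)).measure_lt_top.ne hA hA1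
    hdiff.integrableOn hhoriz hvert
  exact ⟨C, hC.mono fun x hx => by rw [← hx]; ring⟩

end AveragedPrimitive

section Components

theorem exists_integrable_ae_eq_smul {X E : Type*} [MeasurableSpace X] [NormedAddCommGroup E]
    [NormedSpace ℝ E] {μ : Measure X} {k : X → E} {r : E} (hk : Integrable k μ)
    (hkr : ∀ᵐ x ∂μ, ∃ s : ℝ, k x = s • r) :
    ∃ s : X → ℝ, Integrable s μ ∧ ∀ᵐ x ∂μ, k x = s x • r := by
  rcases eq_or_ne r 0 with rfl | hr
  · exact ⟨0, integrable_zero _ _ _, hkr.mono fun x ⟨_, hs⟩ => by simp [hs]⟩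
  · obtain ⟨f, hf⟩ := SeparatingDual.exists_eq_one (R := ℝ) hr
    exact ⟨fun x => f (k x), f.integrable_comp hk, hkr.mono fun x ⟨_, hs⟩ => by simp [hs, hf]⟩

theorem mul_one_add_smul_outer (R : Mat2) (g : ℝ) (a b : V2) :
    R * (1 + g • outer a b) = R + g • outer (R.mulVec a) b := by
  rw [mul_add, mul_one, Matrix.mul_smul]
  exact congrArg (R + g • ·) (Matrix.mul_vecMulVec R a b)

theorem smul_outer (c : ℝ) (a b : V2) : outer (c • a) b = c • outer a b :=
  Matrix.smul_vecMulVec c a b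

theorem hasMeasureDerivOn_mulVec {Ω : Set V2} (hΩ : Bornology.IsBounded Ω) (R : Mat2) (c : V2)
    (i j : Fin 2) (σ : Measure V2) :
    HasMeasureDerivOn Ω (Pi.single j 1) (fun x => R.mulVec x i + c i) (fun _ => R i j) σ 0 := by
  set L : V2 →L[ℝ] ℝ := (ContinuousLinearMap.proj i).comp R.mulVecLin.toContinuousLinearMap
  have hderiv (x : V2) : fderiv ℝ (fun x => L x + c i) x (Pi.single j 1) = R i j := by
    rw [fderiv_add_const, L.fderiv]
    exact congrFun (R.mulVec_single_one j) i
  have hcontDiff : ContDiff ℝ 1 fun x => L x + c i := L.contDiff.add contDiff_const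
  simpa only [hderiv] using! HasMeasureDerivOn.of_contDiff hΩ hcontDiff (Pi.single j 1) σ

end Components

section Characterization

variable {a b c d : ℝ} {Ω : Set V2} {u : V2 → V2} {σ : Measure V2} {R : Mat2}

theorem hasMeasureDerivOn_mulVec_add_smul {w γ H : V2 → ℝ} {n : V2}
    (hΩ : Bornology.IsBounded Ω)
    (hw : ∀ j, HasMeasureDerivOn Ω (Pi.single j 1) w (fun x => γ x * n j) σ fun x => H x * n j)
    (R : Mat2) (r c : V2) (i j : Fin 2) :
    HasMeasureDerivOn Ω (Pi.single j 1) (fun x => (R.mulVec x + w x • r + c) i)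
      (fun x => (R + γ x • outer r n) i j) σ fun x => (H x • outer r n) i j := by
  refine ((hasMeasureDerivOn_mulVec hΩ R c i j σ).add ((hw j).const_mul (r i))).congr ?_ ?_ ?_ <;>
    refine .of_forall fun x => ?_
  · simp only [Pi.add_apply, Pi.smul_apply, smul_eq_mul]
    ring
  · simp only [outer, Matrix.add_apply, Matrix.smul_apply, Matrix.of_apply, smul_eq_mul]
    ring
  · simp only [outer, Matrix.smul_apply, Matrix.of_apply, smul_eq_mul, Pi.zero_apply]
    ring

theorem exists_hasBVDerivOn_of_ae_eq_mulVec_add_smul {ϑ : ℝ → ℝ} {r c₀ : V2}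
    (hϑ : BoundedVariationOn ϑ (Ioo c d))
    (hu : ∀ᵐ x ∂volume.restrict (box (Ioo a b) (Ioo c d)), u x = R.mulVec x + ϑ (x 1) • r + c₀) :
    ∃ (γ : ℝ → ℝ) (σ : Measure V2) (κ : V2 → ℝ),
      IntegrableOn (fun x => γ (x 1)) (box (Ioo a b) (Ioo c d)) ∧
      HasBVDerivOn (box (Ioo a b) (Ioo c d)) u (fun x => R + γ (x 1) • outer r e2) σ
        fun x => κ x • outer r e2 := by
  obtain ⟨γ, τ, H, hτ, hperp, hconc, hder⟩ := exists_hasMeasureDerivOn_of_boundedVariationOn hϑ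
  have hab : volume (Ioo a b) ≠ ⊤ := measure_Ioo_lt_top.ne
  have : IsFiniteMeasure (volume.restrict (Ioo a b)) := isFiniteMeasure_restrict.2 hab
  set Ω := box (Ioo a b) (Ioo c d)
  have hϑj (j : Fin 2) : HasMeasureDerivOn Ω (Pi.single j 1) (fun x => ϑ (x 1))
      (fun x => γ (x 1) * e2 j) (planeProd (volume.restrict (Ioo a b)) τ)
      fun x => H (x 1) * e2 j := by
    fin_cases j
    · simpa [e2] using! hasMeasureDerivOn_box_single_zero_comp_snd hab hder.integrableOn _
    · simpa [e2] using! hder.box_single_one_comp_snd hab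
  have hΩ : Bornology.IsBounded Ω := isBounded_box (Metric.isBounded_Ioo _ _)
    (Metric.isBounded_Ioo _ _)
  have hBV := hasBVDerivOn_withDensity_mnorm (planeProd_mutuallySingular_volume hperp)
    (planeProd_compl_box_eq_zero (by simp) hconc) fun i j =>
      (hasMeasureDerivOn_mulVec_add_smul hΩ hϑj R r c₀ i j).congr
        (hu.mono fun x hx => (congrFun hx i).symm) .rfl .rfl
  simp only [smul_smul] at hBV
  exact ⟨γ, _, _, integrableOn_box_comp_snd hab hder.integrableOn_density, hBV⟩

theorem exists_integrable_ae_eq_smul_outer_e2 {G : V2 → Mat2} {r : V2}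
    (hG : ∀ i, Integrable (fun x => G x i 1) σ) (hGr : ∀ᵐ x ∂σ, ∃ s : ℝ, G x = s • outer r e2) :
    ∃ s : V2 → ℝ, Integrable s σ ∧ ∀ᵐ x ∂σ, G x = s x • outer r e2 := by
  have hcol {x : V2} {s : ℝ} (hx : G x = s • outer r e2) : (fun i => G x i 1) = s • r := by
    ext i
    simp [hx, outer, e2]
  obtain ⟨s, hs, hsr⟩ := exists_integrable_ae_eq_smul (.of_eval hG)
    (hGr.mono fun x ⟨t, ht⟩ => ⟨t, hcol ht⟩)
  refine ⟨s, hs, ?_⟩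
  filter_upwards [hGr, hsr] with x ⟨t, ht⟩ hx
  rw [ht, ← smul_outer, ← smul_outer, ← hx, hcol ht]

theorem exists_ae_eq_mulVec_add_smul_of_hasBVDerivOn {γ : V2 → ℝ} {r : V2} {gu gs : V2 → Mat2}
    (hab : a < b) (hcd : c < d) (hu : HasBVDerivOn (box (Ioo a b) (Ioo c d)) u gu σ gs)
    (hγ : IntegrableOn γ (box (Ioo a b) (Ioo c d)))
    (hgu : ∀ᵐ x ∂volume.restrict (box (Ioo a b) (Ioo c d)), gu x = R + γ x • outer r e2)
    (hgs : ∀ᵐ x ∂σ, ∃ s : ℝ, gs x = s • outer r e2) :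
    ∃ (ϑ : ℝ → ℝ) (c₀ : V2), BoundedVariationOn ϑ (Ioo c d) ∧
      ∀ᵐ x ∂volume.restrict (box (Ioo a b) (Ioo c d)), u x = R.mulVec x + ϑ (x 1) • r + c₀ := by
  have : IsFiniteMeasure σ := ⟨hu.fin.lt_top⟩
  set Ω := box (Ioo a b) (Ioo c d)
  have hΩ : Bornology.IsBounded Ω := isBounded_box (Metric.isBounded_Ioo _ _)
    (Metric.isBounded_Ioo _ _)
  obtain ⟨A, hA, hA1⟩ := IsTestFunctionOn.exists_integral_eq_one isOpen_Ioo (nonempty_Ioo.2 hab)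
  obtain ⟨s, hs, hgs⟩ := exists_integrable_ae_eq_smul_outer_e2
    (fun i => (hu.hasMeasureDerivOn i 1).integrable_density) hgs
  have hv (i j : Fin 2) : HasMeasureDerivOn Ω (Pi.single j 1) (fun x => (u x - R.mulVec x) i)
      (fun x => r i * (γ x * e2 j)) σ (fun x => r i * (s x * e2 j)) := by
    refine ((hu.hasMeasureDerivOn i j).sub (hasMeasureDerivOn_mulVec hΩ R 0 i j σ)).congr ?_ ?_ ?_
    · exact .of_forall fun x => by simp
    · refine hgu.mono fun x hx => ?_
      simp only [hx, outer, Matrix.add_apply, Matrix.smul_apply, Matrix.of_apply, smul_eq_mul]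
      ring
    · refine hgs.mono fun x hx => ?_
      simp only [hx, outer, Matrix.smul_apply, Matrix.of_apply, smul_eq_mul, Pi.zero_apply]
      ring
  have hv₀ (i : Fin 2) :
      HasMeasureDerivOn Ω (Pi.single 0 1) (fun x => (u x - R.mulVec x) i) 0 σ 0 :=
    (hv i 0).congr .rfl (.of_forall fun _ => by simp [e2]) (.of_forall fun _ => by simp [e2])
  have hv₁ (i : Fin 2) : HasMeasureDerivOn Ω (Pi.single 1 1) (fun x => (u x - R.mulVec x) i)
      (fun x => r i * γ x) σ (fun x => r i * s x) :=
    (hv i 1).congr .rfl (.of_forall fun _ => by simp [e2]) (.of_forall fun _ => by simp [e2])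
  choose c₀ hc₀ using fun i =>
    exists_ae_eq_averagedPrimitive_add_const hcd hA hA1 (hv₀ i) (hv₁ i)
  refine ⟨averagedPrimitive A Ω γ σ s, c₀, boundedVariationOn_averagedPrimitive hA hγ hs _, ?_⟩
  filter_upwards [ae_all_iff.2 hc₀] with x hx
  ext i
  have hxi := hx i
  simp only [averagedPrimitive_const_mul, Pi.sub_apply] at hxi
  simp only [Pi.add_apply, Pi.smul_apply, smul_eq_mul]
  linarith

theorem charApar_Rect_general (S : Set Mat2) (hab : a < b) (hcd : c < d) (u : V2 → V2) :
    (∃ R ∈ S, ∃ ϑ : ℝ → ℝ, ∃ c₀ : V2, BoundedVariationOn ϑ (Ioo c d) ∧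
        ∀ᵐ x ∂volume.restrict (box (Ioo a b) (Ioo c d)),
          u x = R.mulVec x + ϑ (x 1) • R.mulVec e1 + c₀) ↔
      ∃ gu σ gs, HasBVDerivOn (box (Ioo a b) (Ioo c d)) u gu σ gs ∧
        ∃ R ∈ S, ∃ γ : V2 → ℝ,
          IntegrableOn γ (box (Ioo a b) (Ioo c d)) ∧
          (∃ γ1 : ℝ → ℝ, ∀ᵐ x ∂volume.restrict (box (Ioo a b) (Ioo c d)), γ x = γ1 (x 1)) ∧
          (∀ᵐ x ∂volume.restrict (box (Ioo a b) (Ioo c d)),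
            gu x = R * (1 + γ x • outer e1 e2)) ∧
          ∃ ϱ : V2 → V2, ∀ᵐ x ∂σ,
            gs x = outer (ϱ x) e2 ∧ vnorm (ϱ x) = 1 ∧ ∃ s : ℝ, ϱ x = s • R.mulVec e1 := by
  simp only [mul_one_add_smul_outer]
  constructor
  · rintro ⟨R, hR, ϑ, c₀, hϑ, hu⟩
    obtain ⟨γ, σ, κ, hγ, hBV⟩ := exists_hasBVDerivOn_of_ae_eq_mulVec_add_smul hϑ hu
    simp only [← smul_outer (κ _)] at hBV
    refine ⟨_, σ, _, hBV, R, hR, fun x => γ (x 1), hγ, ⟨γ, .of_forall fun _ => rfl⟩,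
      .of_forall fun _ => rfl, fun x => κ x • R.mulVec e1,
      hBV.unit.mono fun x hx => ⟨rfl, ?_, _, rfl⟩⟩
    rwa [← mnorm_outer_e2]
  · rintro ⟨gu, σ, gs, hBV, R, hR, γ, hγ, -, hgu, ϱ, hϱ⟩
    refine ⟨R, hR, exists_ae_eq_mulVec_add_smul_of_hasBVDerivOn hab hcd hBV hγ hgu <|
      hϱ.mono fun x ⟨hgs, _, s, hs⟩ => ⟨s, ?_⟩⟩
    rw [hgs, hs, smul_outer]

end Characterization

/-- Lemma 5.2: characterization of `A∥` on `Ω = (0,1) × (−1,1)`.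
`A∥` consists exactly of the `BV` maps with `∇u = R(I + γ e₁⊗e₂)` for a constant
`R ∈ SO(2)` and `γ ∈ L¹(Ω)` depending only on `x₂`, and with
`D^s u = (ϱ ⊗ e₂)|D^s u|` for some `ϱ` with `|ϱ| = 1` and `ϱ ∥ Re₁` `|D^s u|`-a.e. -/
theorem charApar_Rect :
    ∀ u : V2 → V2,
      memAparOn Rect (-1) 1 u ↔
        ∃ gu σ gs, HasBVDerivOn Rect u gu σ gs ∧
          ∃ R ∈ SO2, ∃ γ : V2 → ℝ,
            IntegrableOn γ Rect volume ∧
            (∃ γ1 : ℝ → ℝ, ∀ᵐ x ∂(volume.restrict Rect), γ x = γ1 (x 1)) ∧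
            (∀ᵐ x ∂(volume.restrict Rect), gu x = R * (1 + γ x • outer e1 e2)) ∧
            ∃ ϱ : V2 → V2, ∀ᵐ x ∂σ,
              gs x = outer (ϱ x) e2 ∧ vnorm (ϱ x) = 1 ∧ ∃ s : ℝ, ϱ x = s • R.mulVec e1 :=
  charApar_Rect_general SO2 one_pos (by norm_num)
end
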